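/- arXiv:math/0412241 — 2 statements merged into one kernel-verified Lean document; each statement's English description precedes it below -/
import Mathlib

section
/- Let n ≥ 3 be an integer and p > 1 with n > 2p/(p−1). Then there exist γ > 0 and l ∈ (0,1], and for these there exist R₀ > 1 and ε₀ ∈ (0,1), such that for every R ≥ R₀, every ε ∈ (0, ε₀], and every classical solution u of the Cauchy problem (P) with initial data g ≡ 0, one has u(x,t) ≤ ((|x|−ε)(R−|x|))^{−2/(p−1)} · (1+|x|)^{2/(p−1)} · (1 + (ε/|x|)^{l} R^{2/(p−1)}) · exp(γ(t+1)) for all x with ε < |x| < R and all t ≥ 0. -/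
open scoped BigOperators

/-- The Laplacian of `f : ℝⁿ → ℝ`, expressed as the sum of second directional
derivatives along the standard basis vectors. -/
noncomputable def laplacian {n : ℕ} (f : EuclideanSpace ℝ (Fin n) → ℝ)
    (x : EuclideanSpace ℝ (Fin n)) : ℝ :=
  ∑ i : Fin n, fderiv ℝ (fun y => fderiv ℝ f y (EuclideanSpace.single i 1)) x
    (EuclideanSpace.single i 1)

/-- A classical solution of the Cauchy problem (P):
`u_t = Δu − u^p` in `(ℝⁿ∖{0}) × (0,∞)`, `u ≥ 0`, `u(·,0) = g`,
with `u` continuous on `(ℝⁿ∖{0}) × [0,∞)`, `C²` in `x` and `C¹` in `t`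
on `(ℝⁿ∖{0}) × (0,∞)`. -/
structure IsClassicalSolution (n : ℕ) (p : ℝ) (g : EuclideanSpace ℝ (Fin n) → ℝ)
    (u : EuclideanSpace ℝ (Fin n) → ℝ → ℝ) : Prop where
  continuousOn : ContinuousOn (fun q : EuclideanSpace ℝ (Fin n) × ℝ => u q.1 q.2)
    {q : EuclideanSpace ℝ (Fin n) × ℝ | q.1 ≠ 0 ∧ 0 ≤ q.2}
  contDiff_space : ∀ x : EuclideanSpace ℝ (Fin n), x ≠ 0 → ∀ t : ℝ, 0 < t →
    ContDiffAt ℝ 2 (fun y => u y t) x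
  contDiff_time : ∀ x : EuclideanSpace ℝ (Fin n), x ≠ 0 → ∀ t : ℝ, 0 < t →
    ContDiffAt ℝ 1 (u x) t
  pde : ∀ x : EuclideanSpace ℝ (Fin n), x ≠ 0 → ∀ t : ℝ, 0 < t →
    deriv (u x) t = laplacian (fun y => u y t) x - u x t ^ p
  nonneg : ∀ x : EuclideanSpace ℝ (Fin n), x ≠ 0 → ∀ t : ℝ, 0 < t → 0 ≤ u x t
  initial : ∀ x : EuclideanSpace ℝ (Fin n), x ≠ 0 → u x 0 = g x

/-!
Write `α = 2 / (p - 1)` and let `f (‖x‖)` be the spatial part of the supersolution. Its logarithmic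
derivative `q` is `-α / (r - ε)` plus terms that are milder near the inner sphere, and
`Δ f / f = q' + q ^ 2 + (n - 1) / r * q`. Near the inner sphere `q' + q ^ 2` contributes
`α (α + 1) / (r - ε) ^ 2` and the drift contributes about `-(n - 1) α / (r (r - ε))`. Since
`n > 2 p / (p - 1)` means `n - 1 > α + 1`, the drift wins unless `ε / r` is bounded below, and there
the correction `(ε / r) ^ l R ^ α` makes `f ^ (p - 1)` at least a constant multiple of
`(r - ε) ^ (-2)`. Near the outer sphere `f ^ (p - 1)` dominates `(R - r) ^ (-2)`. Hence
`Δ f ≤ C (f + f ^ p)` with `C` independent of `ε` and `R`, so that `f exp (γ (t + 1))` is a strict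
supersolution for large `γ`. As `f` blows up on both spheres, the maximum principle applies to `u`
without any information on its boundary values.
-/

open Real Set Filter Topology Module InnerProductSpace
open scoped Laplacian

section SecondOrderConditions

lemma deriv_deriv_nonpos_of_isLocalMax {f : ℝ → ℝ} {x : ℝ} (hf : ContinuousAt f x)
    (hmax : IsLocalMax f x) : deriv (deriv f) x ≤ 0 := by
  by_contra! hpos
  have hmin : IsLocalMin f x := isLocalMin_of_deriv_deriv_pos hpos hmax.deriv_eq_zero hf
  have hconst : f =ᶠ[𝓝 x] fun _ => f x := by
    filter_upwards [hmax, hmin] with s hle hge using le_antisymm hle hge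
  have hzero : deriv (deriv f) x = 0 := by
    simpa using hconst.deriv.deriv_eq
  exact hpos.ne' hzero

lemma deriv_nonneg_of_eventually_le_left {f : ℝ → ℝ} {t : ℝ} (hf : DifferentiableAt ℝ f t)
    (hmax : ∀ᶠ s in 𝓝[<] t, f s ≤ f t) : 0 ≤ deriv f t := by
  refine ge_of_tendsto (hasDerivAt_iff_tendsto_slope_left_right.1 hf.hasDerivAt).1 ?_
  filter_upwards [hmax, self_mem_nhdsWithin] with s hle hlt
  rw [slope_def_field]
  exact div_nonneg_of_nonpos (sub_nonpos.2 hle) (sub_nonpos.2 hlt.le)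

end SecondOrderConditions

section Laplacian

variable {E : Type*} [NormedAddCommGroup E]

lemma deriv_deriv_comp_add_smul [NormedSpace ℝ E] {f : E → ℝ} {x : E} (hf : ContDiffAt ℝ 2 f x)
    (v : E) :
    deriv (deriv fun s : ℝ => f (x + s • v)) 0 = iteratedFDeriv ℝ 2 f x ![v, v] := by
  have hline (s : ℝ) : HasDerivAt (fun s : ℝ => x + s • v) v s := by
    simpa using ((hasDerivAt_id s).smul_const v).const_add x
  have hline_zero : x + (0 : ℝ) • v = x := by simp
  have htend : Tendsto (fun s : ℝ => x + s • v) (𝓝 0) (𝓝 x) := by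
    simpa using (hline 0).continuousAt.tendsto
  have hdiff : ∀ᶠ y in 𝓝 x, DifferentiableAt ℝ f y :=
    (hf.eventually (by simp)).mono fun y hy => hy.differentiableAt (by norm_num)
  have hfirst : deriv (fun s : ℝ => f (x + s • v)) =ᶠ[𝓝 0] fun s => fderiv ℝ f (x + s • v) v := by
    filter_upwards [htend.eventually hdiff] with s hs
    exact (hs.hasFDerivAt.comp_hasDerivAt s (hline s)).deriv
  have hfderiv : DifferentiableAt ℝ (fderiv ℝ f) x :=
    (hf.fderiv_right (m := 1) (by norm_num)).differentiableAt (by norm_num)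
  have hsecond : HasFDerivAt (fun y => fderiv ℝ f y v) ((fderiv ℝ (fderiv ℝ f) x).flip v)
      (x + (0 : ℝ) • v) := by
    rw [hline_zero]
    simpa using hfderiv.hasFDerivAt.clm_apply (hasFDerivAt_const v x)
  rw [hfirst.deriv_eq, iteratedFDeriv_two_apply]
  exact (hsecond.comp_hasDerivAt 0 (hline 0)).deriv

variable [InnerProductSpace ℝ E]

lemma hasFDerivAt_norm {x : E} (hx : x ≠ 0) :
    HasFDerivAt (fun y : E => ‖y‖) (‖x‖⁻¹ • innerSL ℝ x) x := by
  have h := (hasStrictFDerivAt_norm_sq x).hasFDerivAt.sqrt (by simpa using hx)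
  simp only [sqrt_sq (norm_nonneg _)] at h
  refine h.congr_fderiv ?_
  ext v
  simp only [one_div, mul_inv_rev, smul_apply, coe_innerSL_apply, nsmul_eq_mul, Nat.cast_ofNat,
    smul_eq_mul]
  field_simp

variable [FiniteDimensional ℝ E]

lemma laplacian_nonpos_of_isLocalMax {f : E → ℝ} {x : E} (hf : ContDiffAt ℝ 2 f x)
    (hmax : IsLocalMax f x) : Δ f x ≤ 0 := by
  rw [laplacian_eq_iteratedFDeriv_stdOrthonormalBasis]
  refine Finset.sum_nonpos fun i _ => ?_
  set v := stdOrthonormalBasis ℝ E i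
  have hline : ContinuousAt (fun s : ℝ => x + s • v) 0 := by fun_prop
  have hline_zero : x + (0 : ℝ) • v = x := by simp
  rw [← deriv_deriv_comp_add_smul hf]
  refine deriv_deriv_nonpos_of_isLocalMax ?_ ?_
  · exact ContinuousAt.comp (g := f) (by rw [hline_zero]; exact hf.continuousAt) hline
  · exact IsLocalMax.comp_continuous (f := f) (g := fun s : ℝ => x + s • v) (b := 0)
      (by simpa using hmax) hline

lemma laplacian_comp_norm {F F' : ℝ → ℝ} {F'' : ℝ} {x : E} (hx : x ≠ 0)
    (hF : ∀ᶠ r in 𝓝 ‖x‖, HasDerivAt F (F' r) r) (hF' : HasDerivAt F' F'' ‖x‖) :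
    Δ (fun y : E => F ‖y‖) x = F'' + (finrank ℝ E - 1) / ‖x‖ * F' ‖x‖ := by
  have hr : ‖x‖ ≠ 0 := norm_ne_zero_iff.2 hx
  have hgrad : fderiv ℝ (fun y => F ‖y‖) =ᶠ[𝓝 x] fun y => (F' ‖y‖ / ‖y‖) • innerSL ℝ y := by
    filter_upwards [continuous_norm.continuousAt.eventually hF, eventually_ne_nhds hx] with y hy hy0
    have h : HasFDerivAt (fun y => F ‖y‖) _ y := hy.comp_hasFDerivAt y (hasFDerivAt_norm hy0)
    rw [h.fderiv, smul_smul, div_eq_mul_inv]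
  have hhess : HasFDerivAt (fun y => (F' ‖y‖ / ‖y‖) • innerSL ℝ y) _ x :=
    ((hF'.div (hasDerivAt_id _) hr).comp_hasFDerivAt x (hasFDerivAt_norm hx)).smul
      (innerSL ℝ (E := E)).hasFDerivAt
  have hsecond (v : E) : iteratedFDeriv ℝ 2 (fun y => F ‖y‖) x ![v, v]
      = F' ‖x‖ / ‖x‖ * ‖v‖ ^ 2
        + (F'' * ‖x‖ - F' ‖x‖) / ‖x‖ ^ 3 * inner ℝ x v ^ 2 := by
    rw [iteratedFDeriv_two_apply, hgrad.fderiv_eq, hhess.fderiv]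
    have hself : (innerSL ℝ : E →L[ℝ] E →L[ℝ] ℝ) v v = ‖v‖ ^ 2 := real_inner_self_eq_norm_sq v
    simp only [Function.comp_apply, Pi.div_apply, id_eq, mul_one, Matrix.cons_val_zero, add_apply,
      smul_apply, ContinuousLinearMap.smulRight_apply, coe_innerSL_apply, smul_eq_mul,
      Matrix.cons_val_one, Matrix.cons_val_fin_one, hself, add_right_inj]
    field_simp
  rw [laplacian_eq_iteratedFDeriv_stdOrthonormalBasis]
  simp only [hsecond, Finset.sum_add_distrib, ← Finset.mul_sum, OrthonormalBasis.sum_sq_inner_left,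
    OrthonormalBasis.norm_eq_one, one_pow, Finset.sum_const, Finset.card_univ, Fintype.card_fin,
    nsmul_eq_mul, mul_one]
  field_simp
  ring

end Laplacian

lemma laplacian_eq_innerProductSpace_laplacian {n : ℕ} {f : EuclideanSpace ℝ (Fin n) → ℝ}
    {x : EuclideanSpace ℝ (Fin n)} (hf : ContDiffAt ℝ 2 f x) : laplacian f x = Δ f x := by
  have hdiff : DifferentiableAt ℝ (fderiv ℝ f) x :=
    (hf.fderiv_right (m := 1) (by norm_num)).differentiableAt (by norm_num)
  simp [laplacian, laplacian_eq_iteratedFDeriv_orthonormalBasis _ (EuclideanSpace.basisFun _ ℝ),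
    iteratedFDeriv_two_apply, fderiv_clm_apply hdiff]

section Comparison

lemma nonpos_of_deriv_lt_laplacian {E : Type*} [NormedAddCommGroup E] [InnerProductSpace ℝ E]
    [FiniteDimensional ℝ E] {v : E → ℝ → ℝ} {Ω K : Set E} {T : ℝ}
    (hΩ : IsOpen Ω) (hK : IsCompact K) (hKΩ : K ⊆ Ω)
    (hcont : ContinuousOn (fun q : E × ℝ => v q.1 q.2) (K ×ˢ Icc 0 T))
    (hspace : ∀ x ∈ K, ∀ t ∈ Ioc 0 T, ContDiffAt ℝ 2 (fun y => v y t) x)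
    (htime : ∀ x ∈ K, ∀ t ∈ Ioc 0 T, DifferentiableAt ℝ (v x) t)
    (hstrict : ∀ x ∈ K, ∀ t ∈ Ioc 0 T, 0 < v x t → deriv (v x) t < Δ (fun y => v y t) x)
    (hinit : ∀ x ∈ K, v x 0 ≤ 0) (houter : ∀ x ∈ Ω \ K, ∀ t ∈ Icc 0 T, v x t ≤ 0)
    {x : E} (hx : x ∈ Ω) {t : ℝ} (ht : t ∈ Icc 0 T) : v x t ≤ 0 := by
  by_contra! hpos
  have hxK : x ∈ K := by
    by_contra hxK
    exact hpos.not_ge (houter x ⟨hx, hxK⟩ t ht)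
  obtain ⟨⟨y, s⟩, ⟨hy, hs⟩, hmax⟩ :=
    (hK.prod isCompact_Icc).exists_isMaxOn ⟨(x, t), hxK, ht⟩ hcont
  have hvys : 0 < v y s := hpos.trans_le (hmax (show (x, t) ∈ K ×ˢ Icc 0 T from ⟨hxK, ht⟩))
  have hs_pos : 0 < s := hs.1.lt_of_ne fun h => hvys.not_ge (h ▸ hinit y hy)
  have hmax_space : IsLocalMax (fun z => v z s) y := by
    filter_upwards [hΩ.mem_nhds (hKΩ hy)] with z hz
    by_cases hzK : z ∈ K
    · exact hmax (show (z, s) ∈ K ×ˢ Icc 0 T from ⟨hzK, hs⟩)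
    · exact (houter z ⟨hz, hzK⟩ s hs).trans hvys.le
  have hmax_time : ∀ᶠ s' in 𝓝[<] s, v y s' ≤ v y s := by
    filter_upwards [Ioo_mem_nhdsLT hs_pos] with s' hs'
    exact hmax (show (y, s') ∈ K ×ˢ Icc 0 T from ⟨hy, hs'.1.le, hs'.2.le.trans hs.2⟩)
  have hmem : s ∈ Ioc 0 T := ⟨hs_pos, hs.2⟩
  exact (hstrict y hy s hmem hvys).not_ge
    ((laplacian_nonpos_of_isLocalMax (hspace y hy s hmem) hmax_space).trans
      (deriv_nonneg_of_eventually_le_left (htime y hy s hmem) hmax_time))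

lemma exp_mul_sub_rpow_lt {p C γ a b t : ℝ} (hp : 1 < p) (hC : 0 ≤ C) (hCγ : C < γ)
    (hCp : C ≤ (p - 1) * γ) (ha : 0 < a) (hb : b ≤ C * (a + a ^ p)) (ht : 0 ≤ t) :
    exp (γ * (t + 1)) * b - (a * exp (γ * (t + 1))) ^ p < γ * (a * exp (γ * (t + 1))) := by
  have hγ : 0 < γ := hC.trans_lt hCγ
  set e := exp (γ * (t + 1))
  have he_pos : 0 < e := exp_pos _
  have hC_le : C ≤ e ^ (p - 1) := calc
    C ≤ (p - 1) * γ * (t + 1) := hCp.trans (le_mul_of_one_le_right (by positivity) (by linarith))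
    _ = γ * (t + 1) * (p - 1) := by ring
    _ ≤ exp (γ * (t + 1) * (p - 1)) := (by linarith [add_one_le_exp (γ * (t + 1) * (p - 1))])
    _ = e ^ (p - 1) := exp_mul _ _
  have hpow : (a * e) ^ p = e * (e ^ (p - 1) * a ^ p) := by
    rw [mul_rpow ha.le he_pos.le, rpow_sub_one he_pos.ne']
    field_simp
  rw [hpow]
  calc e * b - e * (e ^ (p - 1) * a ^ p)
      ≤ e * (C * (a + a ^ p)) - e * (C * a ^ p) := by gcongr
    _ = C * (a * e) := by ring
    _ < γ * (a * e) := by gcongr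

lemma IsClassicalSolution.exists_le_of_isCompact {n : ℕ} {p : ℝ}
    {g : EuclideanSpace ℝ (Fin n) → ℝ} {u : EuclideanSpace ℝ (Fin n) → ℝ → ℝ}
    (hu : IsClassicalSolution n p g u) {K : Set (EuclideanSpace ℝ (Fin n))} (hK : IsCompact K)
    (hK0 : 0 ∉ K) (T : ℝ) : ∃ M, ∀ x ∈ K, ∀ t ∈ Icc 0 T, u x t ≤ M := by
  have hcont : ContinuousOn (fun q : EuclideanSpace ℝ (Fin n) × ℝ => u q.1 q.2) (K ×ˢ Icc 0 T) :=
    hu.continuousOn.mono fun q hq => ⟨ne_of_mem_of_not_mem hq.1 hK0, hq.2.1⟩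
  obtain ⟨M, hM⟩ := (hK.prod isCompact_Icc).bddAbove_image hcont
  exact ⟨M, fun x hx t ht => hM (mem_image_of_mem _ (mk_mem_prod hx ht))⟩

lemma hasDerivAt_exp_mul_add_one (γ s : ℝ) :
    HasDerivAt (fun s => exp (γ * (s + 1))) (γ * exp (γ * (s + 1))) s := by
  simpa [mul_comm] using (((hasDerivAt_id s).add_const 1).const_mul γ).exp

lemma IsClassicalSolution.deriv_sub_lt_laplacian_sub {n : ℕ} {p C γ s : ℝ}
    {g f : EuclideanSpace ℝ (Fin n) → ℝ} {u : EuclideanSpace ℝ (Fin n) → ℝ → ℝ}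
    {x : EuclideanSpace ℝ (Fin n)} (hu : IsClassicalSolution n p g u) (hp : 1 < p) (hC : 0 ≤ C)
    (hCγ : C < γ) (hCp : C ≤ (p - 1) * γ) (hx : x ≠ 0) (hs : 0 < s) (hf : ContDiffAt ℝ 2 f x)
    (hf_pos : 0 < f x) (hf_laplacian : Δ f x ≤ C * (f x + f x ^ p))
    (hlt : f x * exp (γ * (s + 1)) < u x s) :
    deriv (fun s => u x s - f x * exp (γ * (s + 1))) s
      < Δ (fun y => u y s - f y * exp (γ * (s + 1))) x := by
  have hu_space := hu.contDiff_space x hx s hs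
  have hu_time := ((hu.contDiff_time x hx s hs).differentiableAt (by norm_num)).hasDerivAt
  have hderiv : deriv (fun s => u x s - f x * exp (γ * (s + 1))) s
      = Δ (fun y => u y s) x - u x s ^ p - γ * (f x * exp (γ * (s + 1))) := by
    have h : HasDerivAt (fun s => u x s - f x * exp (γ * (s + 1))) _ s :=
      hu_time.sub ((hasDerivAt_exp_mul_add_one γ s).const_mul (f x))
    rw [h.deriv, hu.pde x hx s hs, laplacian_eq_innerProductSpace_laplacian hu_space]
    ring
  have hlaplacian : Δ (fun y => u y s - f y * exp (γ * (s + 1))) x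
      = Δ (fun y => u y s) x - exp (γ * (s + 1)) * Δ f x := by
    have h : (fun y => u y s - f y * exp (γ * (s + 1)))
        = (fun y => u y s) - exp (γ * (s + 1)) • f := by
      ext y
      simp only [Pi.sub_apply, Pi.smul_apply, smul_eq_mul, mul_comm]
    have hscaled : ContDiffAt ℝ 2 (exp (γ * (s + 1)) • f) x := contDiffAt_const.smul hf
    rw [h, hu_space.laplacian_sub hscaled, laplacian_smul _ hf, smul_eq_mul]
  have hpow : (f x * exp (γ * (s + 1))) ^ p ≤ u x s ^ p :=
    rpow_le_rpow (by positivity) hlt.le (by linarith)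
  linarith [exp_mul_sub_rpow_lt hp hC hCγ hCp hf_pos hf_laplacian hs.le]

theorem IsClassicalSolution.le_mul_exp {n : ℕ} {p C γ : ℝ} {g f : EuclideanSpace ℝ (Fin n) → ℝ}
    {u : EuclideanSpace ℝ (Fin n) → ℝ → ℝ} {Ω : Set (EuclideanSpace ℝ (Fin n))}
    (hu : IsClassicalSolution n p g u) (hp : 1 < p) (hC : 0 ≤ C) (hCγ : C < γ)
    (hCp : C ≤ (p - 1) * γ) (hΩ : IsOpen Ω) (hΩ_bdd : Bornology.IsBounded Ω)
    (hΩ0 : 0 ∉ closure Ω) (hf : ∀ x ∈ Ω, ContDiffAt ℝ 2 f x) (hf_pos : ∀ x ∈ Ω, 0 < f x)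
    (hf_laplacian : ∀ x ∈ Ω, Δ f x ≤ C * (f x + f x ^ p))
    (hf_blowup : ∀ M, ∃ K ⊆ Ω, IsCompact K ∧ ∀ x ∈ Ω \ K, M ≤ f x)
    (hg : ∀ x ∈ Ω, g x ≤ f x * exp γ) {x : EuclideanSpace ℝ (Fin n)} (hx : x ∈ Ω) {t : ℝ}
    (ht : 0 ≤ t) : u x t ≤ f x * exp (γ * (t + 1)) := by
  have hΩ_ne {y} (hy : y ∈ Ω) : y ≠ 0 := ne_of_mem_of_not_mem (subset_closure hy) hΩ0
  obtain ⟨M, hM⟩ := hu.exists_le_of_isCompact hΩ_bdd.isCompact_closure hΩ0 t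
  obtain ⟨K, hKΩ, hK, hMK⟩ := hf_blowup M
  have hu_space {y} (hy : y ∈ K) {s} (hs : s ∈ Ioc 0 t) :=
    hu.contDiff_space y (hΩ_ne (hKΩ hy)) s hs.1
  have hu_time {y} (hy : y ∈ K) {s} (hs : s ∈ Ioc 0 t) : DifferentiableAt ℝ (u y) s :=
    (hu.contDiff_time y (hΩ_ne (hKΩ hy)) s hs.1).differentiableAt (by norm_num)
  refine sub_nonpos.1 (nonpos_of_deriv_lt_laplacian
    (v := fun y s => u y s - f y * exp (γ * (s + 1))) hΩ hK hKΩ ?_ ?_ ?_ ?_ ?_ ?_ hx ⟨ht, le_rfl⟩)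
  · have hf_cont : ContinuousOn f K := fun y hy => (hf y (hKΩ hy)).continuousAt.continuousWithinAt
    refine (hu.continuousOn.mono fun q hq => ⟨hΩ_ne (hKΩ hq.1), hq.2.1⟩).sub ?_
    exact (hf_cont.comp continuousOn_fst fun q hq => hq.1).mul (by fun_prop)
  · exact fun y hy s hs => (hu_space hy hs).sub ((hf y (hKΩ hy)).mul contDiffAt_const)
  · exact fun y hy s hs => (hu_time hy hs).sub
      ((hasDerivAt_exp_mul_add_one γ s).differentiableAt.const_mul (f y))
  · exact fun y hy s hs hlt => hu.deriv_sub_lt_laplacian_sub hp hC hCγ hCp (hΩ_ne (hKΩ hy)) hs.1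
      (hf y (hKΩ hy)) (hf_pos y (hKΩ hy)) (hf_laplacian y (hKΩ hy)) (sub_pos.1 hlt)
  · intro y hy
    simpa [hu.initial y (hΩ_ne (hKΩ hy))] using hg y (hKΩ hy)
  · intro y hy s hs
    have hγ : 0 < γ := hC.trans_lt hCγ
    have hone_le : 1 ≤ exp (γ * (s + 1)) := one_le_exp (mul_nonneg hγ.le (by linarith [hs.1]))
    refine sub_nonpos.2 ((hM y (subset_closure hy.1) s hs).trans ((hMK y hy).trans ?_))
    exact le_mul_of_one_le_right (hf_pos y hy.1).le hone_le

end Comparison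

lemma sub_le_div_rpow {s κ a : ℝ} (hs : 0 ≤ s) (hs1 : s ≤ 1) (hκ : 0 < κ) (ha : 0 ≤ a) :
    s - κ ≤ (s / κ) ^ a := by
  rcases le_total s κ with hle | hge
  · exact (sub_nonpos.2 hle).trans (by positivity)
  · exact (by linarith : s - κ ≤ 1).trans (one_le_rpow ((one_le_div hκ).2 hge) ha)

lemma tendsto_inv_rpow_nhdsGT_zero {α : ℝ} (hα : 0 < α) :
    Tendsto (fun s : ℝ => s⁻¹ ^ α) (𝓝[>] 0) atTop :=
  (tendsto_rpow_atTop hα).comp tendsto_inv_nhdsGT_zero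

lemma exists_isCompact_forall_le_comp_norm {E : Type*} [NormedAddCommGroup E] [ProperSpace E]
    {F : ℝ → ℝ} {a b : ℝ} (hab : a < b) (ha : Tendsto F (𝓝[>] a) atTop)
    (hb : Tendsto F (𝓝[<] b) atTop) (M : ℝ) :
    ∃ K ⊆ {x : E | ‖x‖ ∈ Ioo a b}, IsCompact K ∧ ∀ x ∈ {x : E | ‖x‖ ∈ Ioo a b} \ K, M ≤ F ‖x‖ := by
  obtain ⟨a', ha', hle_left⟩ :=
    (mem_nhdsGT_iff_exists_Ioo_subset' hab).1 (ha.eventually_ge_atTop M)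
  obtain ⟨b', hb', hle_right⟩ :=
    (mem_nhdsLT_iff_exists_Ioo_subset' hab).1 (hb.eventually_ge_atTop M)
  refine ⟨{x | ‖x‖ ∈ Icc a' b'}, fun x hx => ⟨ha'.trans_le hx.1, hx.2.trans_lt hb'⟩, ?_, ?_⟩
  · refine Metric.isCompact_of_isClosed_isBounded (isClosed_Icc.preimage continuous_norm) ?_
    exact isBounded_iff_forall_norm_le.2 ⟨b', fun x hx => hx.2⟩
  · rintro x ⟨⟨hax, hxb⟩, hxK⟩
    rcases lt_or_ge ‖x‖ a' with hlt | hge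
    · exact hle_left ⟨hax, hlt⟩
    · exact hle_right ⟨lt_of_not_ge fun h => hxK ⟨hge, h⟩, hxb⟩

section Profile

variable {E : Type*} [NormedAddCommGroup E] {α l ε R r : ℝ}

/-- The spatial part of `ψ_{R,ε}` as a function of `r = ‖x‖`; the theorem uses
`α = 2 / (p - 1)`. -/
noncomputable def supersolutionProfile (α l ε R r : ℝ) : ℝ :=
  ((r - ε) * (R - r)) ^ (-α) * (1 + r) ^ α * (1 + (ε / r) ^ l * R ^ α)

/-- The share of the singular correction `k = (ε / r) ^ l * R ^ α` in the last factor `1 + k` of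
`supersolutionProfile`; it enters the logarithmic derivative of the latter. -/
noncomputable def singularWeight (α l ε R r : ℝ) : ℝ :=
  (ε / r) ^ l * R ^ α / (1 + (ε / r) ^ l * R ^ α)

/-- The logarithmic derivative of `supersolutionProfile` with respect to `r`, written out explicitly
rather than through `logDeriv` so that it can be differentiated again. -/
noncomputable def profileLogDeriv (α l ε R r : ℝ) : ℝ :=
  -α / (r - ε) + α / (R - r) + α / (1 + r) - l * singularWeight α l ε R r / r

/-- The quotient `Δ f / f` for `f x = supersolutionProfile α l ε R ‖x‖` in dimension `N`: with `q`
the logarithmic derivative it is `q' + q ^ 2 + (N - 1) / r * q`. -/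
noncomputable def profileLaplacianQuotient (N α l ε R r : ℝ) : ℝ :=
  α / (r - ε) ^ 2 + α / (R - r) ^ 2 - α / (1 + r) ^ 2
    + (l * singularWeight α l ε R r
      + l ^ 2 * singularWeight α l ε R r * (1 - singularWeight α l ε R r)) / r ^ 2
    + profileLogDeriv α l ε R r ^ 2 + (N - 1) / r * profileLogDeriv α l ε R r

lemma supersolutionProfile_pos (hε : 0 < ε) (hεr : ε < r) (hrR : r < R) :
    0 < supersolutionProfile α l ε R r := by
  have hr : 0 < r := hε.trans hεr
  have hR : 0 < R := hr.trans hrR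
  unfold supersolutionProfile
  positivity

lemma singularWeight_mem_Icc (hε : 0 ≤ ε) (hr : 0 ≤ r) (hR : 0 ≤ R) :
    singularWeight α l ε R r ∈ Icc 0 1 :=
  ⟨by unfold singularWeight; positivity,
    div_le_one_of_le₀ (le_add_of_nonneg_left zero_le_one) (by positivity)⟩

lemma hasDerivAt_singularTerm (hε : 0 < ε) (hr : 0 < r) :
    HasDerivAt (fun r => (ε / r) ^ l * R ^ α) (-l / r * ((ε / r) ^ l * R ^ α)) r := by
  have h := (((hasDerivAt_id r).inv hr.ne').const_mul ε).rpow_const (p := l)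
    (Or.inl (mul_ne_zero hε.ne' (inv_ne_zero hr.ne')))
  refine (h.mul_const (R ^ α)).congr_deriv ?_
  have hratio : ε * r⁻¹ ≠ 0 := by positivity
  simp only [Pi.inv_apply, id, rpow_sub_one hratio]
  field_simp

lemma hasDerivAt_supersolutionProfile (hε : 0 < ε) (hεr : ε < r) (hrR : r < R) :
    HasDerivAt (supersolutionProfile α l ε R)
      (supersolutionProfile α l ε R r * profileLogDeriv α l ε R r) r := by
  have hr : 0 < r := hε.trans hεr
  have hR : 0 < R := hr.trans hrR
  have hleft : r - ε ≠ 0 := (sub_pos.2 hεr).ne'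
  have hright : R - r ≠ 0 := (sub_pos.2 hrR).ne'
  have hgap : (r - ε) * (R - r) ≠ 0 := mul_ne_zero hleft hright
  have hone : 1 + r ≠ 0 := by positivity
  have hlast : 1 + (ε / r) ^ l * R ^ α ≠ 0 := by positivity
  have hid := hasDerivAt_id r
  have h := (((hid.sub_const ε).mul (hid.const_sub R)).rpow_const (p := -α) (Or.inl hgap)).mul
    ((hid.const_add 1).rpow_const (p := α) (Or.inl hone)) |>.mul
    ((hasDerivAt_singularTerm (α := α) (l := l) (R := R) hε hr).const_add 1)
  refine (show HasDerivAt (supersolutionProfile α l ε R) _ r from h).congr_deriv ?_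
  simp only [supersolutionProfile, profileLogDeriv, singularWeight, Pi.mul_apply, id,
    rpow_sub_one hgap, rpow_sub_one hone]
  field_simp
  ring

lemma hasDerivAt_singularWeight (hε : 0 < ε) (hr : 0 < r) (hR : 0 < R) :
    HasDerivAt (singularWeight α l ε R)
      (-l / r * (singularWeight α l ε R r * (1 - singularWeight α l ε R r))) r := by
  have hlast : 1 + (ε / r) ^ l * R ^ α ≠ 0 := by positivity
  have hterm := hasDerivAt_singularTerm (α := α) (l := l) (R := R) hε hr
  refine (hterm.div (hterm.const_add 1) hlast).congr_deriv ?_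
  simp only [singularWeight]
  field_simp
  ring

lemma hasDerivAt_profileLogDeriv (hε : 0 < ε) (hεr : ε < r) (hrR : r < R) :
    HasDerivAt (profileLogDeriv α l ε R)
      (α / (r - ε) ^ 2 + α / (R - r) ^ 2 - α / (1 + r) ^ 2
        + (l * singularWeight α l ε R r
          + l ^ 2 * singularWeight α l ε R r * (1 - singularWeight α l ε R r)) / r ^ 2) r := by
  have hr : 0 < r := hε.trans hεr
  have hleft : r - ε ≠ 0 := (sub_pos.2 hεr).ne'
  have hright : R - r ≠ 0 := (sub_pos.2 hrR).ne'
  have hone : 1 + r ≠ 0 := by positivity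
  have hid := hasDerivAt_id r
  have hweight := hasDerivAt_singularWeight (α := α) (l := l) hε hr (hr.trans hrR)
  have h := ((((hasDerivAt_const r (-α)).div (hid.sub_const ε) hleft).add
    ((hasDerivAt_const r α).div (hid.const_sub R) hright)).add
    ((hasDerivAt_const r α).div (hid.const_add 1) hone)).sub
    ((hweight.const_mul l).div hid hr.ne')
  refine (show HasDerivAt (profileLogDeriv α l ε R) _ r from h).congr_deriv ?_
  simp only [id]
  field_simp
  ring

lemma laplacian_supersolutionProfile_norm [InnerProductSpace ℝ E] [FiniteDimensional ℝ E] {x : E}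
    (hε : 0 < ε) (hεx : ε < ‖x‖) (hxR : ‖x‖ < R) :
    Δ (fun y : E => supersolutionProfile α l ε R ‖y‖) x
      = supersolutionProfile α l ε R ‖x‖
        * profileLaplacianQuotient (finrank ℝ E) α l ε R ‖x‖ := by
  have hfirst : ∀ᶠ r in 𝓝 ‖x‖, HasDerivAt (supersolutionProfile α l ε R)
      (supersolutionProfile α l ε R r * profileLogDeriv α l ε R r) r := by
    filter_upwards [Ioo_mem_nhds hεx hxR] with r hr
    exact hasDerivAt_supersolutionProfile hε hr.1 hr.2
  have hsecond := (hasDerivAt_supersolutionProfile (α := α) (l := l) hε hεx hxR).mul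
    (hasDerivAt_profileLogDeriv (α := α) (l := l) hε hεx hxR)
  rw [laplacian_comp_norm (norm_pos_iff.1 (hε.trans hεx)) hfirst hsecond, profileLaplacianQuotient]
  ring

lemma contDiffAt_supersolutionProfile_norm [InnerProductSpace ℝ E] {x : E} (hε : 0 < ε)
    (hεx : ε < ‖x‖) (hxR : ‖x‖ < R) :
    ContDiffAt ℝ 2 (fun y : E => supersolutionProfile α l ε R ‖y‖) x := by
  have hx : 0 < ‖x‖ := hε.trans hεx
  have hnorm : ContDiffAt ℝ 2 (fun y : E => ‖y‖) x := contDiffAt_norm ℝ (norm_pos_iff.1 hx)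
  have hgap : (‖x‖ - ε) * (R - ‖x‖) ≠ 0 :=
    mul_ne_zero (sub_pos.2 hεx).ne' (sub_pos.2 hxR).ne'
  have hone : 1 + ‖x‖ ≠ 0 := by positivity
  have hratio : ε / ‖x‖ ≠ 0 := by positivity
  unfold supersolutionProfile
  exact ((((hnorm.sub contDiffAt_const).mul (contDiffAt_const.sub hnorm)).rpow_const_of_ne hgap).mul
    ((contDiffAt_const.add hnorm).rpow_const_of_ne hone)).mul
    (contDiffAt_const.add (((contDiffAt_const.div hnorm hx.ne').rpow_const_of_ne hratio).mul
      contDiffAt_const))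

lemma inv_sub_rpow_le_supersolutionProfile (hα : 0 ≤ α) (hε : 0 < ε) (hεr : ε < r) (hrR : r < R) :
    (R - r)⁻¹ ^ α ≤ supersolutionProfile α l ε R r := by
  have hr : 0 < r := hε.trans hεr
  have hR : 0 < R := hr.trans hrR
  have hleft : 0 < r - ε := sub_pos.2 hεr
  calc (R - r)⁻¹ ^ α
      ≤ (((r - ε) * (R - r))⁻¹ * (1 + r)) ^ α := by
        gcongr
        rw [mul_inv, mul_right_comm, inv_mul_eq_div]
        exact le_mul_of_one_le_left (by positivity) ((one_le_div hleft).2 (by linarith))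
    _ = ((r - ε) * (R - r)) ^ (-α) * (1 + r) ^ α := by
        rw [mul_rpow (by positivity) (by positivity), inv_rpow (by positivity),
          rpow_neg (by positivity)]
    _ ≤ supersolutionProfile α l ε R r :=
        le_mul_of_one_le_right (by positivity) (le_add_of_nonneg_right (by positivity))

lemma ratio_rpow_mul_inv_sub_rpow_le_supersolutionProfile (hα : 0 ≤ α) (hε : 0 < ε) (hεr : ε < r)
    (hrR : r < R) : (ε / r) ^ l * (r - ε)⁻¹ ^ α ≤ supersolutionProfile α l ε R r := by
  have hr : 0 < r := hε.trans hεr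
  have hR : 0 < R := hr.trans hrR
  have hright : 0 < R - r := sub_pos.2 hrR
  calc (ε / r) ^ l * (r - ε)⁻¹ ^ α
      ≤ (ε / r) ^ l * (((r - ε) * (R - r))⁻¹ * (1 + r) * R) ^ α := by
        gcongr
        rw [mul_inv, mul_assoc, mul_assoc, inv_mul_eq_div (R - r)]
        exact le_mul_of_one_le_right (by positivity) ((one_le_div hright).2 (by nlinarith))
    _ = ((r - ε) * (R - r)) ^ (-α) * (1 + r) ^ α * ((ε / r) ^ l * R ^ α) := by
        rw [mul_rpow (by positivity) (by positivity), mul_rpow (by positivity) (by positivity),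
          inv_rpow (by positivity), rpow_neg (by positivity)]
        ring
    _ ≤ supersolutionProfile α l ε R r := by
        unfold supersolutionProfile
        gcongr
        exact le_add_of_nonneg_left zero_le_one

lemma tendsto_supersolutionProfile_nhdsGT (hα : 0 < α) (hε : 0 < ε) (hεR : ε < R) :
    Tendsto (supersolutionProfile α l ε R) (𝓝[>] ε) atTop := by
  have hshift : Tendsto (fun r => r - ε) (𝓝[>] ε) (𝓝[>] 0) := by
    refine tendsto_nhdsWithin_iff.2 ⟨?_, ?_⟩
    · exact ((continuous_id.sub continuous_const).tendsto' ε 0 (sub_self ε)).mono_left inf_le_left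
    · filter_upwards [self_mem_nhdsWithin] with r hr using mem_Ioi.2 (sub_pos.2 hr)
  have hratio : Tendsto (fun r => (ε / r) ^ l) (𝓝[>] ε) (𝓝 1) := by
    have h : ContinuousAt (fun r => (ε / r) ^ l) ε :=
      (continuousAt_const.div continuousAt_id hε.ne').rpow_const (Or.inl (by simp [hε.ne']))
    simpa [ContinuousAt, hε.ne'] using h.tendsto.mono_left nhdsWithin_le_nhds
  refine tendsto_atTop_mono' _ ?_
    (hratio.pos_mul_atTop one_pos ((tendsto_inv_rpow_nhdsGT_zero hα).comp hshift))
  filter_upwards [Ioo_mem_nhdsGT hεR] with r hr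
  exact ratio_rpow_mul_inv_sub_rpow_le_supersolutionProfile hα.le hε hr.1 hr.2

lemma tendsto_supersolutionProfile_nhdsLT (hα : 0 < α) (hε : 0 < ε) (hεR : ε < R) :
    Tendsto (supersolutionProfile α l ε R) (𝓝[<] R) atTop := by
  have hshift : Tendsto (fun r => R - r) (𝓝[<] R) (𝓝[>] 0) := by
    refine tendsto_nhdsWithin_iff.2 ⟨?_, ?_⟩
    · exact ((continuous_const.sub continuous_id).tendsto' R 0 (sub_self R)).mono_left inf_le_left
    · filter_upwards [self_mem_nhdsWithin] with r hr using mem_Ioi.2 (sub_pos.2 hr)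
  refine tendsto_atTop_mono' _ ?_ ((tendsto_inv_rpow_nhdsGT_zero hα).comp hshift)
  filter_upwards [Ioo_mem_nhdsLT hεR] with r hr
  exact inv_sub_rpow_le_supersolutionProfile hα.le hε hr.1 hr.2

/- Here `A = (r - ε)⁻¹`, `B = (R - r)⁻¹`, `D = (1 + r)⁻¹`, `P = r⁻¹` and `θ` is the singular weight.
The terms `α (α + 1) A ^ 2` and `-(N - 1 - 2 l) α P A` decide; `P A = (1 - ε P) A ^ 2` makes them
comparable and the other drift terms are absorbed by Young's inequality with `α μ P ^ 2`. -/
lemma laplacianQuotient_polynomial_le {N α l μ ε θ A B D P : ℝ} (hα : 0 < α) (hl : 0 ≤ l)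
    (hμ : 0 < μ) (hN : N - 1 - 2 * l = α + 1 + 2 * μ) (hθ : θ ∈ Icc 0 1) (hA : 0 ≤ A) (hB : 0 ≤ B)
    (hD : D ∈ Icc 0 1) (hP : 0 ≤ P) (hPA : P ≤ A) (hPε : P = A - ε * P * A) :
    α * A ^ 2 + α * B ^ 2 - α * D ^ 2 + (l * θ + l ^ 2 * θ * (1 - θ)) * P ^ 2
        + (-α * A + α * B + α * D - l * θ * P) ^ 2
        + (N - 1) * P * (-α * A + α * B + α * D - l * θ * P)
      ≤ α * ((α + 1 + 2 * μ) * (ε * P) - μ) * A ^ 2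
        + (α * (α + 1) + α ^ 2 + α * (N - 1) ^ 2 / (2 * μ)) * (1 + B ^ 2) := by
  obtain ⟨hθ0, hθ1⟩ := hθ
  obtain ⟨hD0, hD1⟩ := hD
  have hDsq : D ^ 2 ≤ 1 := pow_le_one₀ hD0 hD1
  have young (X : ℝ) :
      (N - 1) * α * P * X ≤ α * μ / 2 * P ^ 2 + α * (N - 1) ^ 2 / (2 * μ) * X ^ 2 := by
    have hsq : α / (2 * μ) * (μ * P - (N - 1) * X) ^ 2
        = α * μ / 2 * P ^ 2 + α * (N - 1) ^ 2 / (2 * μ) * X ^ 2 - (N - 1) * α * P * X := by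
      field_simp
      ring
    linarith [show 0 ≤ α / (2 * μ) * (μ * P - (N - 1) * X) ^ 2 by positivity]
  have hdrift : α * (N - 1 - 2 * l) * (P * A)
      = α * (α + 1 + 2 * μ) * (A ^ 2 - ε * P * A ^ 2) := by
    rw [hN]
    linear_combination α * (α + 1 + 2 * μ) * A * hPε
  have hDyoung : α * (N - 1) ^ 2 / (2 * μ) * D ^ 2 ≤ α * (N - 1) ^ 2 / (2 * μ) :=
    mul_le_of_le_one_right (by positivity) hDsq
  have hBD : α ^ 2 * (2 * (B * D)) ≤ α ^ 2 * (1 + B ^ 2) := by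
    gcongr
    nlinarith [sq_nonneg (B - D)]
  have hPA_sq : α * μ * P ^ 2 ≤ α * μ * A ^ 2 := by gcongr
  have hDpure : (α ^ 2 - α) * D ^ 2 ≤ α * (α + 1) := by nlinarith [sq_nonneg D]
  have hθpure : l * θ * P ^ 2 * (l + 1 - (N - 1)) ≤ 0 :=
    mul_nonpos_of_nonneg_of_nonpos (by positivity) (by linarith)
  have hθcross : 2 * α * l * (A * P) * θ ≤ 2 * α * l * (A * P) :=
    mul_le_of_le_one_right (by positivity) hθ1
  have hdropped : 0 ≤ 2 * α ^ 2 * (A * B) + 2 * α ^ 2 * (A * D) + 2 * α * l * θ * (B * P)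
      + 2 * α * l * θ * (D * P) := by positivity
  linarith [young B, young D]

lemma profileLaplacianQuotient_le {N μ : ℝ} (hα : 0 < α) (hl : 0 ≤ l) (hμ : 0 < μ)
    (hN : N - 1 - 2 * l = α + 1 + 2 * μ) (hε : 0 < ε) (hεr : ε < r) (hrR : r < R) :
    profileLaplacianQuotient N α l ε R r
      ≤ α * ((α + 1 + 2 * μ) * (ε / r) - μ) * (r - ε)⁻¹ ^ 2
        + (α * (α + 1) + α ^ 2 + α * (N - 1) ^ 2 / (2 * μ)) * (1 + (R - r)⁻¹ ^ 2) := by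
  have hr : 0 < r := hε.trans hεr
  have hleft : 0 < r - ε := sub_pos.2 hεr
  have hright : 0 < R - r := sub_pos.2 hrR
  have h := laplacianQuotient_polynomial_le hα hl hμ hN
    (singularWeight_mem_Icc (α := α) (l := l) hε.le hr.le (hr.trans hrR).le)
    (inv_nonneg.2 hleft.le) (inv_nonneg.2 hright.le)
    ⟨inv_nonneg.2 (by positivity), inv_le_one_of_one_le₀ (le_add_of_nonneg_right hr.le)⟩
    (inv_nonneg.2 hr.le) (inv_anti₀ hleft (sub_le_self r hε.le)) (ε := ε) (by field_simp)
  calc profileLaplacianQuotient N α l ε R r = _ := by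
        simp only [profileLaplacianQuotient, profileLogDeriv, div_eq_mul_inv, ← inv_pow]
    _ ≤ _ := h
    _ = _ := by rw [div_eq_mul_inv ε r]

lemma inv_sub_sq_le_supersolutionProfile_rpow {β : ℝ} (hα : 0 < α) (hαβ : α * β = 2)
    (hε : 0 < ε) (hεr : ε < r) (hrR : r < R) :
    (R - r)⁻¹ ^ 2 ≤ supersolutionProfile α l ε R r ^ β := by
  have hβ : 0 ≤ β := nonneg_of_mul_nonneg_right (hαβ ▸ zero_le_two) hα
  calc (R - r)⁻¹ ^ 2 = ((R - r)⁻¹ ^ α) ^ β := by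
        rw [← rpow_mul (by positivity), hαβ, rpow_two]
    _ ≤ supersolutionProfile α l ε R r ^ β := by
        gcongr
        exact inv_sub_rpow_le_supersolutionProfile hα.le hε hεr hrR

lemma ratio_rpow_mul_inv_sub_sq_le_supersolutionProfile_rpow {β : ℝ} (hα : 0 < α)
    (hαβ : α * β = 2) (hε : 0 < ε) (hεr : ε < r) (hrR : r < R) :
    (ε / r) ^ (l * β) * (r - ε)⁻¹ ^ 2 ≤ supersolutionProfile α l ε R r ^ β := by
  have hβ : 0 ≤ β := nonneg_of_mul_nonneg_right (hαβ ▸ zero_le_two) hα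
  have hr : 0 < r := hε.trans hεr
  calc (ε / r) ^ (l * β) * (r - ε)⁻¹ ^ 2 = ((ε / r) ^ l * (r - ε)⁻¹ ^ α) ^ β := by
        rw [mul_rpow (by positivity) (by positivity), ← rpow_mul (by positivity),
          ← rpow_mul (by positivity), hαβ, rpow_two]
    _ ≤ supersolutionProfile α l ε R r ^ β := by
        gcongr
        exact ratio_rpow_mul_inv_sub_rpow_le_supersolutionProfile hα.le hε hεr hrR

lemma profileLaplacianQuotient_le_mul_one_add_rpow {N μ β : ℝ} (hα : 0 < α)
    (hαβ : α * β = 2) (hl : 0 ≤ l) (hμ : 0 < μ) (hN : N - 1 - 2 * l = α + 1 + 2 * μ) (hε : 0 < ε)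
    (hεr : ε < r) (hrR : r < R) :
    profileLaplacianQuotient N α l ε R r
      ≤ (α * (α + 1 + 2 * μ) / (μ / (α + 1 + 2 * μ)) ^ (l * β)
          + (α * (α + 1) + α ^ 2 + α * (N - 1) ^ 2 / (2 * μ)))
        * (1 + supersolutionProfile α l ε R r ^ β) := by
  have hβ : 0 ≤ β := nonneg_of_mul_nonneg_right (hαβ ▸ zero_le_two) hα
  have hr : 0 < r := hε.trans hεr
  set f := supersolutionProfile α l ε R r
  have hleft : α * ((α + 1 + 2 * μ) * (ε / r) - μ) * (r - ε)⁻¹ ^ 2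
      ≤ α * (α + 1 + 2 * μ) / (μ / (α + 1 + 2 * μ)) ^ (l * β) * f ^ β := calc
    α * ((α + 1 + 2 * μ) * (ε / r) - μ) * (r - ε)⁻¹ ^ 2
      = α * (α + 1 + 2 * μ) * (ε / r - μ / (α + 1 + 2 * μ)) * (r - ε)⁻¹ ^ 2 := by
        field_simp
    _ ≤ α * (α + 1 + 2 * μ) * (ε / r / (μ / (α + 1 + 2 * μ))) ^ (l * β) * (r - ε)⁻¹ ^ 2 := by
        gcongr
        exact sub_le_div_rpow (by positivity) (div_le_one_of_le₀ hεr.le hr.le) (by positivity)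
          (by positivity)
    _ = α * (α + 1 + 2 * μ) / (μ / (α + 1 + 2 * μ)) ^ (l * β)
          * ((ε / r) ^ (l * β) * (r - ε)⁻¹ ^ 2) := by
        rw [div_rpow (by positivity) (by positivity)]
        ring
    _ ≤ _ := by
        gcongr
        exact ratio_rpow_mul_inv_sub_sq_le_supersolutionProfile_rpow hα hαβ hε hεr hrR
  have hright := inv_sub_sq_le_supersolutionProfile_rpow (l := l) hα hαβ hε hεr hrR
  calc profileLaplacianQuotient N α l ε R r
      ≤ α * ((α + 1 + 2 * μ) * (ε / r) - μ) * (r - ε)⁻¹ ^ 2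
        + (α * (α + 1) + α ^ 2 + α * (N - 1) ^ 2 / (2 * μ)) * (1 + (R - r)⁻¹ ^ 2) :=
        profileLaplacianQuotient_le hα hl hμ hN hε hεr hrR
    _ ≤ α * (α + 1 + 2 * μ) / (μ / (α + 1 + 2 * μ)) ^ (l * β) * (1 + f ^ β)
        + (α * (α + 1) + α ^ 2 + α * (N - 1) ^ 2 / (2 * μ)) * (1 + f ^ β) := by
        refine add_le_add (hleft.trans ?_) ?_ <;> gcongr
        exact le_add_of_nonneg_left zero_le_one
    _ = _ := (add_mul _ _ _).symm

lemma exists_profileLaplacianQuotient_le {N β : ℝ} (hα : 0 < α) (hαβ : α * β = 2)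
    (hN : α + 2 < N) :
    ∃ C ≥ 0, ∃ l ∈ Ioc (0 : ℝ) 1, ∀ ε R r, 0 < ε → ε < r → r < R →
      profileLaplacianQuotient N α l ε R r ≤ C * (1 + supersolutionProfile α l ε R r ^ β) := by
  obtain ⟨l, hl, hl1, hlN⟩ : ∃ l, 0 < l ∧ l ≤ 1 ∧ l ≤ (N - 2 - α) / 4 :=
    ⟨min 1 ((N - 2 - α) / 4), lt_min one_pos (by linarith), min_le_left _ _, min_le_right _ _⟩
  obtain ⟨μ, hμN⟩ : ∃ μ, N - 1 - 2 * l = α + 1 + 2 * μ := ⟨(N - 2 - α - 2 * l) / 2, by ring⟩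
  have hμ : 0 < μ := by linarith
  refine ⟨_, ?_, l, ⟨hl, hl1⟩, fun ε R r hε hεr hrR =>
    profileLaplacianQuotient_le_mul_one_add_rpow hα hαβ hl.le hμ hμN hε hεr hrR⟩
  positivity

lemma exists_laplacian_supersolutionProfile_norm_le [InnerProductSpace ℝ E]
    [FiniteDimensional ℝ E] {p : ℝ} (hα : 0 < α) (hαp : α * (p - 1) = 2)
    (hN : α + 2 < finrank ℝ E) :
    ∃ C ≥ 0, ∃ l ∈ Ioc (0 : ℝ) 1, ∀ ε R, 0 < ε → ∀ x : E, ε < ‖x‖ → ‖x‖ < R →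
      Δ (fun y : E => supersolutionProfile α l ε R ‖y‖) x
        ≤ C * (supersolutionProfile α l ε R ‖x‖ + supersolutionProfile α l ε R ‖x‖ ^ p) := by
  obtain ⟨C, hC, l, hl, hquot⟩ := exists_profileLaplacianQuotient_le hα hαp hN
  refine ⟨C, hC, l, hl, fun ε R hε x hεx hxR => ?_⟩
  rw [laplacian_supersolutionProfile_norm hε hεx hxR]
  have hf := supersolutionProfile_pos (α := α) (l := l) hε hεx hxR
  set f := supersolutionProfile α l ε R ‖x‖
  calc f * profileLaplacianQuotient (finrank ℝ E) α l ε R ‖x‖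
      ≤ f * (C * (1 + f ^ (p - 1))) := by
        gcongr
        exact hquot ε R ‖x‖ hε hεx hxR
    _ = C * (f + f ^ p) := by
        rw [rpow_sub_one hf.ne']
        field_simp

end Profile

theorem solution_dominated_by_supersolution_general {n : ℕ} {p : ℝ} (hp : 1 < p)
    (hnp : 2 * p / (p - 1) < n) :
    ∃ γ > 0, ∃ l ∈ Ioc (0 : ℝ) 1, ∀ ε R, 0 < ε → ∀ g u, IsClassicalSolution n p g u →
      (∀ x, ε < ‖x‖ → ‖x‖ < R → g x ≤ supersolutionProfile (2 / (p - 1)) l ε R ‖x‖ * exp γ) →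
      ∀ x, ε < ‖x‖ → ‖x‖ < R → ∀ t, 0 ≤ t →
        u x t ≤ supersolutionProfile (2 / (p - 1)) l ε R ‖x‖ * exp (γ * (t + 1)) := by
  have hp' : 0 < p - 1 := sub_pos.2 hp
  set α := 2 / (p - 1) with hα_def
  have hα : 0 < α := by positivity
  have hαp : α * (p - 1) = 2 := div_mul_cancel₀ 2 hp'.ne'
  have hN : α + 2 < finrank ℝ (EuclideanSpace ℝ (Fin n)) := by
    rw [finrank_euclideanSpace_fin]
    convert hnp using 1
    rw [hα_def]
    field_simp
    ring
  obtain ⟨C, hC, l, hl, hlaplacian⟩ := exists_laplacian_supersolutionProfile_norm_le hα hαp hN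
  refine ⟨C + 1 + C / (p - 1), by positivity, l, hl, fun ε R hε g u hu hg x hεx hxR t ht => ?_⟩
  have hclosure : closure {y : EuclideanSpace ℝ (Fin n) | ‖y‖ ∈ Ioo ε R} ⊆ {y | ‖y‖ ∈ Icc ε R} :=
    closure_minimal (fun y hy => Ioo_subset_Icc_self hy) (isClosed_Icc.preimage continuous_norm)
  refine hu.le_mul_exp (f := fun y => supersolutionProfile α l ε R ‖y‖) hp hC ?_ ?_
    (isOpen_Ioo.preimage continuous_norm)
    (isBounded_iff_forall_norm_le.2 ⟨R, fun y hy => hy.2.le⟩)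
    (fun h => hε.not_ge (by simpa using (hclosure h).1))
    (fun y hy => contDiffAt_supersolutionProfile_norm hε hy.1 hy.2)
    (fun y hy => supersolutionProfile_pos hε hy.1 hy.2)
    (fun y hy => hlaplacian ε R hε y hy.1 hy.2)
    (exists_isCompact_forall_le_comp_norm (hεx.trans hxR)
      (tendsto_supersolutionProfile_nhdsGT hα hε (hεx.trans hxR))
      (tendsto_supersolutionProfile_nhdsLT hα hε (hεx.trans hxR)))
    (fun y hy => hg y hy.1 hy.2) ⟨hεx, hxR⟩ ht
  · linarith [div_nonneg hC hp'.le]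
  · have h : (p - 1) * (C + 1 + C / (p - 1)) = (p - 1) * (C + 1) + C := by field_simp
    nlinarith

/-- for `n > 2p/(p-1)`, every classical solution of (P) with vanishing
initial data is dominated by the supersolution `ψ_{R,ε}`. -/
theorem solution_dominated_by_supersolution
    (n : ℕ) (hn : 3 ≤ n) (p : ℝ) (hp : 1 < p) (hnp : 2 * p / (p - 1) < (n : ℝ)) :
    ∃ γ > (0:ℝ), ∃ l ∈ Set.Ioc (0:ℝ) 1, ∃ R₀ > (1:ℝ), ∃ ε₀ ∈ Set.Ioo (0:ℝ) 1,
      ∀ R ≥ R₀, ∀ ε ∈ Set.Ioc (0:ℝ) ε₀,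
        ∀ u : EuclideanSpace ℝ (Fin n) → ℝ → ℝ,
          IsClassicalSolution n p (fun _ => 0) u →
          ∀ x : EuclideanSpace ℝ (Fin n), ε < ‖x‖ → ‖x‖ < R → ∀ t : ℝ, 0 ≤ t →
            u x t ≤ ((‖x‖ - ε) * (R - ‖x‖)) ^ (-2 / (p - 1)) * (1 + ‖x‖) ^ (2 / (p - 1))
              * (1 + (ε / ‖x‖) ^ l * R ^ (2 / (p - 1))) * Real.exp (γ * (t + 1)) := by
  obtain ⟨γ, hγ, l, hl, hdom⟩ := solution_dominated_by_supersolution_general hp hnp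
  refine ⟨γ, hγ, l, hl, 2, one_lt_two, 1 / 2, by norm_num, fun R _ ε hε u hu => ?_⟩
  simpa only [supersolutionProfile, ← neg_div] using hdom ε R hε.1 _ u hu fun x hεx hxR =>
    mul_nonneg (supersolutionProfile_pos hε.1 hεx hxR).le (exp_nonneg γ)
end

section
/- Let p > 1, l ∈ (0,1], R > 0 and M ≥ 1. Then for all real numbers ε, r with 0 < ε ≤ r, one has (r−ε)·R ≤ M·(r−ε)²·R² + M·(1 + (ε/r)^{l}·R^{2/(p−1)})^{p−1}. -/
/-!
With `x = (r - ε) R` and `B` the power on the right, the claim reads `x ≤ M x² + M B`. Since `B` is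
a nonnegative power of a number that is at least `1`, we have `B ≥ 1`, so the quadratic
`M x² - x + M B` has discriminant `1 - 4 M² B ≤ 0` as soon as `M ≥ 1 / 2`.
-/

theorem le_mul_sq_add_of_one_le_four_mul {K : Type*} [CommRing K] [LinearOrder K]
    [IsStrictOrderedRing K] {a b : K} (ha : 0 < a) (hab : 1 ≤ 4 * a * b) (x : K) :
    x ≤ a * x ^ 2 + b := by
  have complete_square : 4 * a * (a * x ^ 2 + b - x) = (2 * a * x - 1) ^ 2 + (4 * a * b - 1) := by
    ring
  have product_nonneg : 0 ≤ 4 * a * (a * x ^ 2 + b - x) :=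
    complete_square ▸ add_nonneg (sq_nonneg _) (sub_nonneg.2 hab)
  exact sub_nonneg.1 (nonneg_of_mul_nonneg_right product_nonneg (by positivity))

theorem inequality_J2_general {p R M ε r : ℝ} (l : ℝ) (hp : 1 < p) (hR : 0 ≤ R) (hM : 1 / 2 ≤ M)
    (hε : 0 < ε) (hr : 0 < r) :
    (r - ε) * R ≤ M * (r - ε) ^ 2 * R ^ 2
      + M * (1 + (ε / r) ^ l * R ^ (2 / (p - 1))) ^ (p - 1) := by
  set B := (1 + (ε / r) ^ l * R ^ (2 / (p - 1))) ^ (p - 1)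
  have one_le_B : 1 ≤ B :=
    Real.one_le_rpow (le_add_of_nonneg_right (by positivity)) (sub_nonneg.2 hp.le)
  have M_pos : 0 < M := one_half_pos.trans_le hM
  have discrim_nonpos : 1 ≤ 4 * M * (M * B) :=
    calc (1 : ℝ) = 4 * (1 / 2) * (1 / 2 * 1) := by norm_num
      _ ≤ 4 * M * (M * B) := by gcongr
  calc (r - ε) * R ≤ M * ((r - ε) * R) ^ 2 + M * B :=
        le_mul_sq_add_of_one_le_four_mul M_pos discrim_nonpos _
    _ = M * (r - ε) ^ 2 * R ^ 2 + M * B := by rw [mul_pow, mul_assoc]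

/-- the elementary inequality (J₂):
`(r-ε)R ≤ M(r-ε)²R² + M(1 + (ε/r)^l R^{2/(p-1)})^{p-1}`. -/
theorem inequality_J2
    (p l R M : ℝ) (hp : 1 < p) (hl : l ∈ Set.Ioc (0:ℝ) 1) (hR : 0 < R) (hM : 1 ≤ M)
    (ε r : ℝ) (hε : 0 < ε) (hεr : ε ≤ r) :
    (r - ε) * R ≤ M * (r - ε) ^ 2 * R ^ 2
      + M * (1 + (ε / r) ^ l * R ^ (2 / (p - 1))) ^ (p - 1) :=
  inequality_J2_general l hp hR.le (one_half_lt_one.le.trans hM) hε (hε.trans_le hεr)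
end
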